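/- arXiv:1909.10457 — 2 statements merged into one kernel-verified Lean document; each statement's English description precedes it below -/
import Mathlib

section
/- Let k ≥ 2 be an integer and let G : ℝ^{k−1} → ℝ be a bounded measurable function that is continuous at the origin (0,…,0). Then lim_{T→∞} ∫_{ℝ^{k−1}} F_T^{(k)}(u₁,…,u_{k−1}) G(u₁,…,u_{k−1}) du₁…du_{k−1} = G(0,…,0), where F_T^{(k)}(u₁,…,u_{k−1}) = (2π)^{−(k−1)} T⁻¹ ∏_{j=1}^{k} sin(T u_j / 2)/(u_j / 2) with u_k = −(u₁ + … + u_{k−1}). -/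
/-!
After the substitution `u = (2π / T) x` the kernel no longer depends on `T`: it becomes
`Φ(x) = ∏ p(x_j) · p(∑ x_j)` with `p = nsinc`, and the integral becomes
`∫ Φ(x) G((2π / T) x) dx`. If `Φ` is integrable with integral `1`, dominated convergence gives the
limit `G(0)`.

Integrability (`integrable_Phi`): `Φ` is a product of `n + 1` values of `p` at linear forms on `ℝⁿ`,
any `n` of which are coordinates for a volume-preserving linear change of variables. The pointwise
bound `prod_le_sum_rpow` dominates `|Φ|` by the sum, over the omitted form, of the products of
`|p| ^ (1 + 1/n)` over the other `n` forms, and `|p| ^ r` is integrable on `ℝ` for every `r > 1`.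

Total mass (`integral_Phi`): `p` is the Fourier transform of the indicator of `[-1/2, 1/2]`, so
Fourier inversion for the convolution of two modulated indicators gives
`∫ p(ξ) p(ξ + a) dξ = p(a)`. By Fubini this integrates out the coordinates one at a time.
-/

open MeasureTheory Filter

/-- The normalized cardinal sine `sin (π x) / (π x)`, with value `1` at `0`. It is the Fourier
transform, in Mathlib's normalization, of the indicator of `[-1/2, 1/2]`. -/
noncomputable def nsinc (x : ℝ) : ℝ := Real.sinc (Real.pi * x)

lemma continuous_nsinc : Continuous nsinc := Real.continuous_sinc.comp (by fun_prop)

lemma abs_nsinc_le (x : ℝ) : |nsinc x| ≤ 2 * (1 + ‖x‖)⁻¹ := by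
  have h1 : |nsinc x| ≤ 1 := Real.abs_sinc_le_one _
  have h2 : |nsinc x| * |x| ≤ 1 := by
    rcases eq_or_ne x 0 with rfl | hx
    · simp
    · have hpi := Real.pi_pos
      have : |nsinc x| = |Real.sin (Real.pi * x)| / (Real.pi * |x|) := by
        rw [nsinc, Real.sinc_of_ne_zero (by positivity), abs_div, abs_mul, abs_of_pos hpi]
      rw [this, div_mul_eq_mul_div, div_le_one (by positivity)]
      have := Real.abs_sin_le_one (Real.pi * x)
      have := Real.pi_gt_three
      have := abs_nonneg x
      nlinarith
  rw [← div_eq_mul_inv, le_div_iff₀ (by positivity), Real.norm_eq_abs]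
  linarith

lemma integrable_nsinc_rpow {r : ℝ} (hr : 1 < r) : Integrable (fun x => |nsinc x| ^ r) := by
  have h := (integrable_one_add_norm (E := ℝ) (μ := volume) (r := r) (by simpa using hr)).const_mul
    ((2:ℝ) ^ r)
  refine h.mono' ((continuous_nsinc.abs.rpow_const (fun _ => Or.inr (by linarith))).aestronglyMeasurable)
    (ae_of_all _ fun x => ?_)
  rw [Real.norm_of_nonneg (by positivity), Real.rpow_neg (by positivity),
    ← Real.inv_rpow (by positivity), ← Real.mul_rpow (by positivity) (by positivity)]
  exact Real.rpow_le_rpow (abs_nonneg _) (abs_nsinc_le x) (by linarith)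

lemma integral_exp_box (b : ℝ) :
    ∫ t in Set.Icc (-(1/2) : ℝ) (1/2), Complex.exp (-2 * Real.pi * Complex.I * b * t) = (nsinc b : ℂ) := by
  rw [integral_Icc_eq_integral_Ioc, ← intervalIntegral.integral_of_le (by norm_num)]
  rcases eq_or_ne b 0 with rfl | hb
  · simp [nsinc]; norm_num
  · have hb' : (b : ℂ) ≠ 0 := by exact_mod_cast hb
    have hpi : (Real.pi : ℂ) ≠ 0 := by exact_mod_cast Real.pi_ne_zero
    have hI := Complex.I_ne_zero
    rw [integral_exp_mul_complex (by simp [hb, Real.pi_ne_zero]), nsinc,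
      Real.sinc_of_ne_zero (mul_ne_zero Real.pi_ne_zero hb)]
    push_cast
    rw [Complex.sin]
    rw [show -2 * (Real.pi:ℂ) * Complex.I * b * (1/2) = -(Real.pi * b) * Complex.I by ring,
      show -2 * (Real.pi:ℂ) * Complex.I * b * (-(1/2)) = (Real.pi * b) * Complex.I by ring]
    field_simp
    rw [Complex.I_sq]; ring

/-- The indicator of `[-1/2, 1/2]` modulated by the character `t ↦ exp (-2πi a t)`, so that its
Fourier transform is `nsinc` translated by `a`. -/
noncomputable def modBox (a : ℝ) : ℝ → ℂ :=
  (Set.Icc (-(1/2) : ℝ) (1/2)).indicator fun t => Complex.exp (-2 * Real.pi * Complex.I * a * t)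

lemma integrable_modBox (a : ℝ) : Integrable (modBox a) := by
  rw [modBox, integrable_indicator_iff measurableSet_Icc]
  exact (by fun_prop : Continuous _).integrableOn_Icc

open FourierTransform Convolution in
lemma fourier_modBox (a ξ : ℝ) : 𝓕 (modBox a) ξ = (nsinc (ξ + a) : ℂ) := by
  rw [Real.fourier_real_eq_integral_exp_smul, ← integral_exp_box, ← integral_indicator measurableSet_Icc]
  congr 1
  ext t
  by_cases ht : t ∈ Set.Icc (-(1/2) : ℝ) (1/2)
  · simp only [modBox, Set.indicator_of_mem ht, smul_eq_mul]
    rw [← Complex.exp_add]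
    push_cast; ring_nf
  · simp only [modBox, Set.indicator_of_notMem ht, smul_zero]

lemma integrable_nsinc_mul (a : ℝ) : Integrable fun ξ => nsinc ξ * nsinc (ξ + a) := by
  have h := integrable_nsinc_rpow (r := 2) (by norm_num)
  refine (h.add (h.comp_add_right a)).mono'
    ((continuous_nsinc.mul (continuous_nsinc.comp (by fun_prop))).aestronglyMeasurable)
    (ae_of_all _ fun x => ?_)
  simp only [Pi.add_apply, Real.rpow_two, sq_abs, Real.norm_eq_abs]
  rw [abs_le]
  constructor <;> nlinarith [sq_nonneg (nsinc x + nsinc (x+a)), sq_nonneg (nsinc x - nsinc (x+a))]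

lemma continuousAt_modBox (a : ℝ) {t : ℝ} (h1 : t ≠ -(1/2)) (h2 : t ≠ 1/2) :
    ContinuousAt (modBox a) t := by
  have hc : Continuous fun t : ℝ => Complex.exp (-2 * Real.pi * Complex.I * a * t) := by fun_prop
  refine hc.continuousOn.continuousAt_indicator ?_
  rw [frontier_Icc (by norm_num)]
  simp only [Set.mem_insert_iff, Set.mem_singleton_iff, not_or]
  exact ⟨h1, h2⟩

lemma norm_modBox_le (a t : ℝ) : ‖modBox a t‖ ≤ 1 := by
  refine (norm_indicator_le_norm_self _ _).trans ?_
  rw [Complex.norm_exp]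
  simp

open FourierTransform Convolution in
/-- The reproducing property of `nsinc`: it is its own autocorrelation. The left side is the inverse
Fourier transform at `0` of the Fourier transform of `modBox 0 ⋆ modBox a`. -/
lemma integral_nsinc_mul (a : ℝ) : ∫ ξ, nsinc ξ * nsinc (ξ + a) = nsinc a := by
  set h : ℝ → ℂ := (modBox 0) ⋆[ContinuousLinearMap.mul ℂ ℂ] (modBox a) with hh
  have hF : 𝓕 h = fun ξ => ((nsinc ξ * nsinc (ξ + a) : ℝ) : ℂ) := by
    ext ξ
    rw [hh, Real.fourier_mul_convolution_eq (integrable_modBox 0) (integrable_modBox a), fourier_modBox,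
      fourier_modBox, add_zero, Complex.ofReal_mul]
  have h_int : Integrable h := (integrable_modBox 0).integrable_convolution _ (integrable_modBox a)
  have hx : ∀ x, h x = ∫ t, modBox 0 t * modBox a (x - t) := fun x => rfl
  have hcont : ContinuousAt h 0 := by
    rw [show h = fun x => ∫ t, modBox 0 t * modBox a (x - t) from funext hx]
    refine continuousAt_of_dominated (bound := fun t => ‖modBox 0 t‖) ?_ ?_ (integrable_modBox 0).norm ?_
    · refine Eventually.of_forall fun x => (integrable_modBox 0).aestronglyMeasurable.mul ?_
      exact ((integrable_modBox a).comp_sub_left x).aestronglyMeasurable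
    · refine Eventually.of_forall fun x => ae_of_all _ fun t => ?_
      rw [norm_mul]
      exact mul_le_of_le_one_right (norm_nonneg _) (norm_modBox_le _ _)
    -- The integrand jumps at `x = 0` only for `t = ±1/2`, a null set.
    · filter_upwards [Measure.ae_ne volume (1/2 : ℝ), Measure.ae_ne volume (-(1/2) : ℝ)] with t h1 h2
      refine continuousAt_const.mul ?_
      have : ContinuousAt (modBox a) (0 - t) := continuousAt_modBox a
        (fun h => h1 (by linarith)) (fun h => h2 (by linarith))
      exact ContinuousAt.comp (f := fun x => x - t) this (by fun_prop)
  have key := h_int.fourierInv_fourier_eq (by rw [hF]; exact (integrable_nsinc_mul a).ofReal) hcont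
  rw [Real.fourierInv_eq, hF] at key
  simp only [inner_zero_right, AddChar.map_zero_eq_one, one_smul] at key
  rw [integral_complex_ofReal, hx] at key
  apply Complex.ofReal_injective
  rw [key, show (nsinc a : ℂ) = nsinc (-a) by rw [nsinc, nsinc, mul_neg, Real.sinc_neg], ← integral_exp_box,
    ← integral_indicator measurableSet_Icc]
  congr 1
  ext t
  by_cases ht : t ∈ Set.Icc (-(1/2) : ℝ) (1/2)
  · have ht' : 0 - t ∈ Set.Icc (-(1/2) : ℝ) (1/2) := by
      constructor <;> linarith [ht.1, ht.2]
    simp only [modBox, Set.indicator_of_mem ht, Set.indicator_of_mem ht']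
    rw [← Complex.exp_add]
    push_cast; ring_nf
  · simp only [modBox, Set.indicator_of_notMem ht, zero_mul]

/-- A Hölder-type pointwise bound: the smallest factor is at most the geometric mean of the others,
so the product is at most the product of the other factors, each with exponent `1 + 1/n`; summing
over the omitted index removes the dependence on where the minimum is attained. -/
lemma prod_le_sum_rpow {n : ℕ} (hn : 1 ≤ n) (c : Fin (n + 1) → ℝ) (hc : ∀ i, 0 ≤ c i) :
    ∏ i, c i ≤ ∑ i : Fin (n + 1), ∏ j, c (i.succAbove j) ^ (1 + (n : ℝ)⁻¹) := by
  obtain ⟨i, -, hi⟩ := Finset.exists_min_image Finset.univ c Finset.univ_nonempty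
  have hn0 : n ≠ 0 := by omega
  have hpow : c i ≤ ∏ j, c (i.succAbove j) ^ ((n : ℝ)⁻¹) := by
    calc c i = ∏ _j : Fin n, c i ^ ((n : ℝ)⁻¹) := by
          rw [Finset.prod_const, Finset.card_univ, Fintype.card_fin,
            Real.rpow_inv_natCast_pow (hc i) hn0]
      _ ≤ _ := Finset.prod_le_prod (fun _ _ => Real.rpow_nonneg (hc i) _) fun j _ =>
          Real.rpow_le_rpow (hc i) (hi _ (Finset.mem_univ _)) (by positivity)
  calc ∏ i, c i = (∏ j, c (i.succAbove j)) * c i := by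
        rw [Fin.prod_univ_succAbove c i, mul_comm]
    _ ≤ (∏ j, c (i.succAbove j)) * ∏ j, c (i.succAbove j) ^ ((n : ℝ)⁻¹) :=
        mul_le_mul_of_nonneg_left hpow (Finset.prod_nonneg fun j _ => hc _)
    _ = ∏ j, c (i.succAbove j) ^ (1 + (n : ℝ)⁻¹) := by
        rw [← Finset.prod_mul_distrib]
        refine Finset.prod_congr rfl fun j _ => ?_
        rw [Real.rpow_one_add' (hc _) (by positivity)]
    _ ≤ _ := Finset.single_le_sum
        (f := fun i : Fin (n + 1) => ∏ j, c (i.succAbove j) ^ (1 + (n : ℝ)⁻¹))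
        (fun i _ => Finset.prod_nonneg fun j _ => Real.rpow_nonneg (hc _) _) (Finset.mem_univ i)

/-- Replacing the coordinate `x i` by the sum of all coordinates is a measure-preserving shear, so
this function is integrable because a product of `q` over independent coordinates is. -/
lemma integrable_sum_mul_prod {q : ℝ → ℝ} (hq : Integrable q) {m : ℕ} (i : Fin (m + 1)) :
    Integrable fun x : Fin (m + 1) → ℝ => q (∑ j, x j) * ∏ j, q (x (i.succAbove j)) := by
  have hP : Integrable fun y : Fin m → ℝ => ∏ j, q (y j) := Integrable.fintype_prod fun _ => hq
  have hshear : MeasurePreserving (fun z : (Fin m → ℝ) × ℝ => (z.1, z.2 + ∑ j, z.1 j))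
      (volume.prod volume) (volume.prod volume) :=
    (MeasurePreserving.id volume).skew_product (g := fun (y : Fin m → ℝ) (t : ℝ) => t + ∑ j, y j)
      (show Measurable fun z : (Fin m → ℝ) × ℝ => z.2 + ∑ j, z.1 j by fun_prop)
      (ae_of_all _ fun y => map_add_right_eq_self volume _)
  have h1 := hshear.integrable_comp_of_integrable (hP.mul_prod hq)
  have h2 := (volume_preserving_piFinSuccAbove (fun _ : Fin (m + 1) => ℝ) i).integrable_comp_of_integrable
    h1.swap
  refine h2.congr (ae_of_all _ fun x => ?_)
  simp [Fin.sum_univ_succAbove x i, MeasurableEquiv.piFinSuccAbove_apply, Fin.insertNthEquiv, mul_comm,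
    Fin.removeNth]

/-- The scale-free Fejér-type kernel on `ℝⁿ` (so `n = k - 1`): the product of `nsinc` over the `n`
coordinates and over their sum. The last frequency enters with a plus sign since `nsinc` is even. -/
noncomputable def Phi (n : ℕ) (x : Fin n → ℝ) : ℝ := (∏ j, nsinc (x j)) * nsinc (∑ j, x j)

lemma continuous_Phi (n : ℕ) : Continuous (Phi n) := by
  unfold Phi
  exact (continuous_finsetProd _ fun j _ => continuous_nsinc.comp (continuous_apply j)).mul
    (continuous_nsinc.comp (by fun_prop))

/-- The absolute value of `Phi` is dominated, by `prod_le_sum_rpow`, by a sum of products of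
`|nsinc| ^ (1 + 1/(m+1))` over `m + 1` of the `m + 2` linear forms, which are independent
coordinates. -/
lemma integrable_Phi (m : ℕ) : Integrable (Phi (m + 1)) := by
  set r : ℝ := 1 + ((m + 1 : ℕ) : ℝ)⁻¹ with hr
  have hq : Integrable fun x => |nsinc x| ^ r := integrable_nsinc_rpow (by rw [hr]; simp; positivity)
  have h0 : Integrable fun x : Fin (m + 1) → ℝ => ∏ j, |nsinc (x j)| ^ r :=
    Integrable.fintype_prod fun _ => hq
  refine (h0.add (integrable_finsetSum Finset.univ fun i _ =>
    integrable_sum_mul_prod hq i)).mono' (continuous_Phi _).aestronglyMeasurable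
    (ae_of_all _ fun x => ?_)
  set b : ℝ := |nsinc (∑ j, x j)| with hb
  set a : Fin (m + 1) → ℝ := fun j => |nsinc (x j)| with ha
  have h := prod_le_sum_rpow (n := m + 1) (by omega) (Fin.cons b a : Fin (m + 2) → ℝ)
    (fun i => by cases i using Fin.cases <;> simp [hb, ha])
  have e : ∀ i : Fin (m + 1), ∏ j, (Fin.cons b a : Fin (m + 2) → ℝ) (i.succ.succAbove j) ^ r
      = b ^ r * ∏ j, a (i.succAbove j) ^ r := fun i => by
    rw [Fin.prod_univ_succ]; simp
  rw [Fin.prod_univ_succ, Fin.sum_univ_succ, ← hr, Finset.sum_congr rfl fun i _ => e i] at h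
  simp only [Fin.cons_zero, Fin.cons_succ, Fin.succAbove_zero] at h
  rw [Phi, norm_mul, norm_prod, mul_comm]
  exact h

/-- Integrating out one coordinate with `integral_nsinc_mul` turns `Phi (m + 1)` into `Phi m`, and
`Phi 0 = nsinc 0 = 1`. -/
lemma integral_Phi (n : ℕ) : ∫ x, Phi n x = 1 := by
  induction n with
  | zero => simp [Phi, nsinc, integral_unique, Measure.real, volume_pi]
  | succ m ih =>
    have hmp := volume_preserving_piFinSuccAbove (fun _ : Fin (m + 1) => ℝ) 0
    set F : ℝ × (Fin m → ℝ) → ℝ := fun z =>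
      (∏ j, nsinc (z.2 j)) * (nsinc z.1 * nsinc (z.1 + ∑ j, z.2 j)) with hF
    have hcomp : F ∘ MeasurableEquiv.piFinSuccAbove (fun _ : Fin (m + 1) => ℝ) 0 = Phi (m + 1) := by
      ext x
      simp only [hF, Phi, Function.comp, Fin.prod_univ_succ, Fin.sum_univ_succ,
        MeasurableEquiv.piFinSuccAbove_apply]
      simp [Fin.tail, Fin.insertNthEquiv]
      ring
    have h_int : Integrable F (volume.prod volume) := by
      rw [← Measure.volume_eq_prod, ← hmp.integrable_comp_emb (MeasurableEquiv.measurableEmbedding _), hcomp]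
      exact integrable_Phi m
    rw [← hcomp, ← ih]
    have := hmp.integral_comp' F
    simp only [Function.comp]
    rw [this, Measure.volume_eq_prod, integral_prod_symm _ h_int]
    refine integral_congr_ae (ae_of_all _ fun y => ?_)
    simp only [hF, Phi]
    rw [integral_const_mul, integral_nsinc_mul]

/-- Away from the null set where a denominator vanishes, the substitution `u = (2π / T) x` turns the
Fejér-type kernel into `Phi`, up to the Jacobian. -/
lemma kernel_rescale (n : ℕ) {T : ℝ} (hT : 0 < T) {x : Fin n → ℝ} (hx : ∀ j, x j ≠ 0)
    (hs : ∑ j, x j ≠ 0) {u : Fin n → ℝ} (hu : u = (2 * Real.pi / T) • x) :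
    ((2 * Real.pi) ^ n)⁻¹ * T⁻¹ * ((∏ j, Real.sin (T * u j / 2) / (u j / 2)) *
        (Real.sin (T * (-(∑ j, u j)) / 2) / ((-(∑ j, u j)) / 2)))
      = (T / (2 * Real.pi)) ^ n * Phi n x := by
  have hpi := Real.pi_pos
  have key : ∀ y : ℝ, y ≠ 0 →
      Real.sin (T * (2 * Real.pi / T * y) / 2) / ((2 * Real.pi / T * y) / 2) = T * nsinc y := by
    intro y hy
    rw [nsinc, Real.sinc_of_ne_zero (by positivity),
      show T * (2 * Real.pi / T * y) / 2 = Real.pi * y by field_simp]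
    field_simp
  have hsum : ∑ j, u j = 2 * Real.pi / T * ∑ j, x j := by
    simp [hu, Finset.mul_sum]
  have hlast : Real.sin (T * (-(∑ j, u j)) / 2) / ((-(∑ j, u j)) / 2) = T * nsinc (∑ j, x j) := by
    rw [← key _ hs, hsum, mul_neg, neg_div, neg_div, Real.sin_neg, neg_div_neg_eq]
  have hprod : ∏ j, Real.sin (T * u j / 2) / (u j / 2) = T ^ n * ∏ j, nsinc (x j) := by
    rw [Finset.prod_congr rfl fun j _ => by
      rw [hu, Pi.smul_apply, smul_eq_mul, key _ (hx j)], Finset.prod_mul_distrib]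
    simp
  rw [hlast, hprod, Phi, div_pow]
  field_simp

lemma ae_sum_ne_zero (m : ℕ) : ∀ᵐ x : Fin (m + 1) → ℝ, ∑ j, x j ≠ 0 := by
  set L : (Fin (m + 1) → ℝ) →ₗ[ℝ] ℝ := ∑ j, LinearMap.proj j with hL
  have hLx : ∀ x, L x = ∑ j, x j := fun x => by simp [hL]
  -- The exceptional set is a proper subspace.
  have h := Measure.addHaar_submodule volume (LinearMap.ker L) (by
    intro h
    have h1 : L (Pi.single 0 1) = 0 := by
      rw [← LinearMap.mem_ker, h]; trivial
    rw [hLx] at h1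
    simp at h1)
  rw [ae_iff]
  convert h using 2
  ext x
  simp [hLx]

lemma ae_coord_ne_zero (n : ℕ) : ∀ᵐ x : Fin n → ℝ, ∀ j, x j ≠ 0 := by
  rw [ae_all_iff]
  intro j
  exact (Measure.quasiMeasurePreserving_eval (fun _ : Fin n => (volume : Measure ℝ)) j).ae
    (Measure.ae_ne volume (0 : ℝ))

/-- The theorem in dimension `m + 1 = k - 1`, which avoids natural-number subtraction. -/
lemma main_aux (m : ℕ) (G : (Fin (m + 1) → ℝ) → ℝ)
    (hGmeas : Measurable G) (hGbdd : ∃ C, ∀ u, |G u| ≤ C) (hGcont : ContinuousAt G 0) :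
    Tendsto
      (fun T : ℝ => ∫ u : Fin (m + 1) → ℝ,
        (((2 * Real.pi) ^ (m + 1))⁻¹ * T⁻¹ *
          ((∏ j, Real.sin (T * u j / 2) / (u j / 2)) *
            (Real.sin (T * (-(∑ j, u j)) / 2) / ((-(∑ j, u j)) / 2)))) * G u)
      atTop (nhds (G 0)) := by
  obtain ⟨C, hC⟩ := hGbdd
  have hscale : Tendsto (fun T : ℝ => 2 * Real.pi / T) atTop (nhds 0) :=
    tendsto_const_nhds.div_atTop tendsto_id
  have hlim : Tendsto (fun T : ℝ => ∫ x, Phi (m + 1) x * G ((2 * Real.pi / T) • x)) atTop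
      (nhds (∫ x, Phi (m + 1) x * G 0)) := by
    refine tendsto_integral_filter_of_dominated_convergence (fun x => ‖Phi (m + 1) x‖ * C)
      (Eventually.of_forall fun T => ?_) (Eventually.of_forall fun T => ae_of_all _ fun x => ?_)
      ((integrable_Phi m).norm.mul_const C) (ae_of_all _ fun x => ?_)
    · exact ((continuous_Phi _).measurable.mul
        (hGmeas.comp (measurable_const_smul _))).aestronglyMeasurable
    · rw [norm_mul]
      exact mul_le_mul_of_nonneg_left (hC _) (norm_nonneg _)
    · refine tendsto_const_nhds.mul (hGcont.tendsto.comp ?_)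
      simpa using hscale.smul_const x
  rw [integral_mul_const, integral_Phi, one_mul] at hlim
  refine hlim.congr' ?_
  filter_upwards [eventually_gt_atTop 0] with T hT
  have hpi := Real.pi_pos
  set H : (Fin (m + 1) → ℝ) → ℝ := fun u => (((2 * Real.pi) ^ (m + 1))⁻¹ * T⁻¹ *
          ((∏ j, Real.sin (T * u j / 2) / (u j / 2)) *
            (Real.sin (T * (-(∑ j, u j)) / 2) / ((-(∑ j, u j)) / 2)))) * G u with hH
  have hcv := Measure.integral_comp_smul volume H (2 * Real.pi / T)
  have hR : 0 < (2 * Real.pi / T) ^ (m + 1) := by positivity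
  rw [Module.finrank_fin_fun, abs_of_pos (by positivity), smul_eq_mul, eq_inv_mul_iff_mul_eq₀ hR.ne']
    at hcv
  rw [← hcv, ← integral_const_mul]
  refine integral_congr_ae ?_
  filter_upwards [ae_sum_ne_zero m, ae_coord_ne_zero (m + 1)] with x hs hx
  simp only [hH]
  rw [kernel_rescale (m + 1) hT hx hs rfl, ← mul_assoc, ← mul_assoc, ← mul_pow,
    show 2 * Real.pi / T * (T / (2 * Real.pi)) = 1 by field_simp, one_pow, one_mul]

/-- (Lemma on multidimensional Fejér-type kernels.)
Let `k ≥ 2` and let `G : ℝ^{k−1} → ℝ` be a bounded measurable function which is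
continuous at the origin.  Then
`∫_{ℝ^{k−1}} F_T^{(k)}(u) G(u) du → G(0)` as `T → ∞`, where
`F_T^{(k)}(u₁,…,u_{k−1}) = (2π)^{−(k−1)} T⁻¹ ∏_{j=1}^{k} sin(T uⱼ/2)/(uⱼ/2)`
with `u_k = −(u₁ + ⋯ + u_{k−1})`. -/
theorem fejer_kernel_limit (k : ℕ) (hk : 2 ≤ k)
    (G : (Fin (k - 1) → ℝ) → ℝ)
    (hGmeas : Measurable G) (hGbdd : ∃ C, ∀ u, |G u| ≤ C)
    (hGcont : ContinuousAt G 0) :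
    Tendsto
      (fun T : ℝ => ∫ u : Fin (k - 1) → ℝ,
        (((2 * Real.pi) ^ (k - 1))⁻¹ * T⁻¹ *
          ((∏ j, Real.sin (T * u j / 2) / (u j / 2)) *
            (Real.sin (T * (-(∑ j, u j)) / 2) / ((-(∑ j, u j)) / 2)))) * G u)
      atTop (nhds (G 0)) := by
  obtain ⟨m, rfl⟩ := Nat.exists_eq_add_of_le' hk
  exact main_aux m G hGmeas hGbdd hGcont
end

section
/- Let Y ⊂ ℝ^q be compact, y : [0,∞) → Y continuous, and let 𝒜 ⊂ ℝ^q be a bounded set with closure 𝒜^c. Put g(t,α) = exp⟨α, y(t)⟩, M = max{exp⟨α,z⟩ : α ∈ 𝒜^c, z ∈ Y}, L = min{exp⟨α,z⟩ : α ∈ 𝒜^c, z ∈ Y}, and Φ_T(α₁,α₂) = ∫₀^T (g(t,α₁) − g(t,α₂))² dt. Assume J_T = (T⁻¹ ∫₀^T yᵢ(t) y_j(t) dt)_{i,j=1}^q converges, as T → ∞, to a positive definite matrix J. Then for every δ ∈ (0, λ_min(J)) there exists T₀ such that for all T > T₀ and all α₁, α₂ ∈ 𝒜^c: L² (λ_min(J)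 − δ) T ‖α₁ − α₂‖² ≤ Φ_T(α₁,α₂) ≤ M² (λ_max(J) + δ) T ‖α₁ − α₂‖², where λ_min(J) and λ_max(J) denote the least and greatest eigenvalues of J. -/
open MeasureTheory Filter

/-!
For real `a b`, the inequality `1 + x ≤ exp x` gives `exp a - exp b ≤ exp a * (a - b)` and
`exp b * (a - b) ≤ exp a - exp b`, so `|exp a - exp b|` lies between `l * |a - b|` and
`m * |a - b|` whenever both exponentials lie in `[l, m]` (`exp_diff_sq_bounds`).  Only the values
at the two end points matter, so no convexity of the parameter set is needed.  With
`a = ⟨α₁, y t⟩` and `b = ⟨α₂, y t⟩`, integration sandwiches `Φ_T(α₁, α₂)` between `L²` and `M²`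
times `∫₀^T ⟨v, y t⟩² dt = T * ⟨v, J_T v⟩`, where `v = α₁ - α₂` (`integral_quadForm`).

Entrywise convergence `J_T → J` makes `⟨v, J_T v⟩` differ from `⟨v, J v⟩` by at most `δ * ‖v‖²`,
uniformly in `v`, for large `T` (`quadForm_close`), and `⟨v, J v⟩` lies between
`λ_min * ‖v‖²` and `λ_max * ‖v‖²` by expansion in an orthonormal eigenbasis (`rayleigh_bounds`).
-/

/-- Two-sided Lipschitz bound for `exp`, with constants controlled at the two end points only. -/
lemma exp_diff_sq_bounds {a b l m : ℝ} (hl : 0 ≤ l)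
    (hla : l ≤ Real.exp a) (hlb : l ≤ Real.exp b) (ham : Real.exp a ≤ m) (hbm : Real.exp b ≤ m) :
    l ^ 2 * (a - b) ^ 2 ≤ (Real.exp a - Real.exp b) ^ 2 ∧
      (Real.exp a - Real.exp b) ^ 2 ≤ m ^ 2 * (a - b) ^ 2 := by
  wlog hab : b ≤ a generalizing a b
  · have := this hlb hla hbm ham (le_of_not_ge hab)
    rwa [sub_sq_comm a b, sub_sq_comm (Real.exp a)]
  have tangent : ∀ x z : ℝ, Real.exp x * (z - x) ≤ Real.exp z - Real.exp x := by
    intro x z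
    have h1 := Real.add_one_le_exp (z - x)
    have h2 : Real.exp z = Real.exp x * Real.exp (z - x) := by
      rw [← Real.exp_add]; congr 1; ring
    rw [h2]
    nlinarith [Real.exp_pos x]
  have h1 := tangent b a
  have h2 := tangent a b
  have hd : 0 ≤ a - b := sub_nonneg.2 hab
  have h3 : l * (a - b) ≤ Real.exp a - Real.exp b :=
    (mul_le_mul_of_nonneg_right hlb hd).trans h1
  have h4 : Real.exp a - Real.exp b ≤ m * (a - b) := by
    have := mul_le_mul_of_nonneg_right ham hd
    linarith
  have h5 : 0 ≤ l * (a - b) := mul_nonneg hl hd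
  rw [← mul_pow, ← mul_pow]
  exact ⟨pow_le_pow_left₀ h5 h3 2, pow_le_pow_left₀ (h5.trans h3) h4 2⟩

lemma rayleigh_bounds {q : ℕ} {J : Matrix (Fin q) (Fin q) ℝ} (hJ : J.IsHermitian)
    (v : Fin q → ℝ) :
    (⨅ i, hJ.eigenvalues i) * ∑ i, v i ^ 2 ≤ ∑ i, ∑ j, v i * v j * J i j ∧
      ∑ i, ∑ j, v i * v j * J i j ≤ (⨆ i, hJ.eigenvalues i) * ∑ i, v i ^ 2 := by
  set b := hJ.eigenvectorBasis
  -- `c i` is the coordinate of `v` along the `i`-th eigenvector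
  set c : Fin q → ℝ := fun i => inner ℝ (b i) (WithLp.toLp 2 v) with hc
  have hnorm : ∑ i, v i ^ 2 = ∑ i, c i ^ 2 := by
    have h := b.sum_inner_mul_inner (WithLp.toLp 2 v) (WithLp.toLp 2 v)
    rw [real_inner_self_eq_norm_sq, EuclideanSpace.real_norm_sq_eq] at h
    rw [← h]
    refine Finset.sum_congr rfl fun i _ => ?_
    rw [real_inner_comm, ← sq]
  have hquad : ∑ i, ∑ j, v i * v j * J i j = ∑ i, hJ.eigenvalues i * c i ^ 2 := by
    have h := b.sum_inner_mul_inner (WithLp.toLp 2 v) (WithLp.toLp 2 (J.mulVec v))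
    have h1 : inner ℝ (WithLp.toLp 2 v) (WithLp.toLp 2 (J.mulVec v))
        = ∑ i, ∑ j, v i * v j * J i j := by
      simp only [PiLp.inner_apply, Matrix.mulVec, dotProduct, RCLike.inner_apply, conj_trivial,
        Finset.sum_mul]
      refine Finset.sum_congr rfl fun i _ => Finset.sum_congr rfl fun j _ => by ring
    rw [← h1, ← h]
    refine Finset.sum_congr rfl fun i _ => ?_
    have h2 : inner ℝ (b i) (WithLp.toLp 2 (J.mulVec v)) = hJ.eigenvalues i * c i := by
      have h3 := hJ.mulVec_eigenvectorBasis i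
      have hT : J.transpose = J := by rw [← Matrix.conjTranspose_eq_transpose_of_trivial]; exact hJ
      simp only [hc, EuclideanSpace.inner_eq_star_dotProduct, star_trivial]
      rw [dotProduct_comm, Matrix.dotProduct_mulVec, ← Matrix.mulVec_transpose, hT, h3,
        smul_dotProduct, dotProduct_comm, smul_eq_mul]
    rw [h2, real_inner_comm]
    simp only [hc]; ring
  rw [hnorm, hquad, Finset.mul_sum, Finset.mul_sum]
  exact ⟨Finset.sum_le_sum fun i _ => mul_le_mul_of_nonneg_right
      (ciInf_le (Set.finite_range _).bddBelow i) (sq_nonneg _),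
    Finset.sum_le_sum fun i _ => mul_le_mul_of_nonneg_right
      (le_ciSup (Set.finite_range _).bddAbove i) (sq_nonneg _)⟩

/-- Entrywise closeness to within `δ / q` costs a factor `q` in the quadratic form, because
`(∑ |v i|)² ≤ q * ∑ (v i)²`. -/
lemma quadForm_close {q : ℕ} (hq : 0 < q) {δ : ℝ} {A B : Fin q → Fin q → ℝ}
    (h : ∀ i j, |A i j - B i j| ≤ δ / q) (v : Fin q → ℝ) :
    |∑ i, ∑ j, v i * v j * A i j - ∑ i, ∑ j, v i * v j * B i j| ≤ δ * ∑ i, v i ^ 2 := by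
  have hq' : (0 : ℝ) < q := by exact_mod_cast hq
  have hδ : 0 ≤ δ / q := (abs_nonneg _).trans (h ⟨0, hq⟩ ⟨0, hq⟩)
  calc |∑ i, ∑ j, v i * v j * A i j - ∑ i, ∑ j, v i * v j * B i j|
      = |∑ i, ∑ j, v i * v j * (A i j - B i j)| := by
        simp only [mul_sub, Finset.sum_sub_distrib]
    _ ≤ ∑ i, ∑ j, |v i| * |v j| * (δ / q) := by
        refine (Finset.abs_sum_le_sum_abs _ _).trans (Finset.sum_le_sum fun i _ => ?_)
        refine (Finset.abs_sum_le_sum_abs _ _).trans (Finset.sum_le_sum fun j _ => ?_)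
        rw [abs_mul, abs_mul]
        exact mul_le_mul_of_nonneg_left (h i j) (by positivity)
    _ = (∑ i, |v i|) ^ 2 * (δ / q) := by
        rw [sq, Finset.sum_mul_sum, Finset.sum_mul]
        simp only [Finset.sum_mul]
    _ ≤ (q * ∑ i, v i ^ 2) * (δ / q) := by
        refine mul_le_mul_of_nonneg_right ?_ hδ
        have := sq_sum_le_card_mul_sum_sq (s := Finset.univ) (f := fun i => |v i|)
        simpa using this
    _ = δ * ∑ i, v i ^ 2 := by field_simp

lemma integral_quadForm {q : ℕ} {y : ℝ → Fin q → ℝ} {T : ℝ} (hT : 0 < T)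
    (hy : ContinuousOn y (Set.uIcc 0 T)) (v : Fin q → ℝ) :
    ∫ t in (0:ℝ)..T, (∑ i, v i * y t i) ^ 2
      = T * ∑ i, ∑ j, v i * v j * (T⁻¹ * ∫ t in (0:ℝ)..T, y t i * y t j) := by
  have hyi : ∀ i, ContinuousOn (fun t => y t i) (Set.uIcc 0 T) := continuousOn_pi.1 hy
  have h1 : ∀ t, (∑ i, v i * y t i) ^ 2 = ∑ i, ∑ j, v i * v j * (y t i * y t j) := by
    intro t
    rw [sq, Finset.sum_mul_sum]
    exact Finset.sum_congr rfl fun i _ => Finset.sum_congr rfl fun j _ => by ring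
  have hint : ∀ i j, IntervalIntegrable (fun t => v i * v j * (y t i * y t j)) volume 0 T :=
    fun i j => (continuousOn_const.mul ((hyi i).mul (hyi j))).intervalIntegrable
  simp only [h1]
  rw [intervalIntegral.integral_finsetSum fun i _ => by
    simpa only [Finset.sum_fn] using IntervalIntegrable.sum Finset.univ fun j _ => hint i j,
    Finset.mul_sum]
  refine Finset.sum_congr rfl fun i _ => ?_
  rw [intervalIntegral.integral_finsetSum fun j _ => hint i j, Finset.mul_sum]
  refine Finset.sum_congr rfl fun j _ => ?_
  rw [intervalIntegral.integral_const_mul]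
  field_simp

/-- (Exponential regression.)  For `g(t,α) = exp⟨α, y(t)⟩`
with `y` a continuous `Y`-valued regressor (`Y` compact), `𝒜` bounded, and
`J_T = (T⁻¹ ∫₀^T yᵢ y_j dt) → J` positive definite, the increment functional
`Φ_T` satisfies, for every `δ ∈ (0, λ_min(J))` and all large `T`,
`L² (λ_min(J) − δ) T ‖α₁ − α₂‖² ≤ Φ_T(α₁,α₂) ≤ M² (λ_max(J) + δ) T ‖α₁ − α₂‖²`
on `𝒜ᶜ`, with `M`, `L` the max resp. min of `exp⟨α,z⟩` over `𝒜ᶜ × Y`. -/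
theorem exp_regression_Phi_bounds
    {q : ℕ} (hq : 0 < q)
    (Y : Set (Fin q → ℝ)) (hYcpt : IsCompact Y) (hYne : Y.Nonempty)
    (y : ℝ → Fin q → ℝ) (hycont : ContinuousOn y (Set.Ici 0))
    (hyY : ∀ t ∈ Set.Ici (0:ℝ), y t ∈ Y)
    (𝒜 : Set (Fin q → ℝ)) (h𝒜b : Bornology.IsBounded 𝒜) (h𝒜ne : 𝒜.Nonempty)
    (J : Matrix (Fin q) (Fin q) ℝ) (hJpd : J.PosDef)
    (hJT : ∀ i j, Tendsto (fun T : ℝ => T⁻¹ * ∫ t in (0:ℝ)..T, y t i * y t j)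
      atTop (nhds (J i j))) :
    ∀ δ : ℝ, 0 < δ → δ < ⨅ i, hJpd.1.eigenvalues i →
      ∃ T₀ : ℝ, ∀ T > T₀, ∀ α₁ ∈ closure 𝒜, ∀ α₂ ∈ closure 𝒜,
        (sInf ((fun p : (Fin q → ℝ) × (Fin q → ℝ) =>
            Real.exp (∑ i, p.1 i * p.2 i)) '' (closure 𝒜 ×ˢ Y))) ^ 2 *
            ((⨅ i, hJpd.1.eigenvalues i) - δ) * T * (∑ i, (α₁ i - α₂ i) ^ 2)
          ≤ (∫ t in (0:ℝ)..T,
              (Real.exp (∑ i, α₁ i * y t i) - Real.exp (∑ i, α₂ i * y t i)) ^ 2)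
        ∧ (∫ t in (0:ℝ)..T,
              (Real.exp (∑ i, α₁ i * y t i) - Real.exp (∑ i, α₂ i * y t i)) ^ 2)
          ≤ (sSup ((fun p : (Fin q → ℝ) × (Fin q → ℝ) =>
              Real.exp (∑ i, p.1 i * p.2 i)) '' (closure 𝒜 ×ˢ Y))) ^ 2 *
              ((⨆ i, hJpd.1.eigenvalues i) + δ) * T * (∑ i, (α₁ i - α₂ i) ^ 2) := by
  intro δ hδ hδlt
  set F : (Fin q → ℝ) × (Fin q → ℝ) → ℝ := fun p => Real.exp (∑ i, p.1 i * p.2 i) with hF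
  set S := F '' (closure 𝒜 ×ˢ Y) with hS
  have hScpt : IsCompact S :=
    (h𝒜b.isCompact_closure.prod hYcpt).image (by rw [hF]; fun_prop)
  have hSne : S.Nonempty := (h𝒜ne.closure.prod hYne).image F
  have hL : ∀ α ∈ closure 𝒜, ∀ z ∈ Y, sInf S ≤ Real.exp (∑ i, α i * z i) := fun α hα z hz =>
    csInf_le hScpt.bddBelow ⟨(α, z), ⟨hα, hz⟩, rfl⟩
  have hM : ∀ α ∈ closure 𝒜, ∀ z ∈ Y, Real.exp (∑ i, α i * z i) ≤ sSup S := fun α hα z hz =>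
    le_csSup hScpt.bddAbove ⟨(α, z), ⟨hα, hz⟩, rfl⟩
  have hL0 : 0 ≤ sInf S := by
    refine le_csInf hSne ?_
    rintro _ ⟨p, -, rfl⟩
    exact (Real.exp_pos _).le
  have hq' : (0 : ℝ) < q := by exact_mod_cast hq
  have hev : ∀ᶠ T : ℝ in atTop, ∀ i j,
      |T⁻¹ * (∫ t in (0:ℝ)..T, y t i * y t j) - J i j| ≤ δ / q := by
    refine eventually_all.2 fun i => eventually_all.2 fun j => ?_
    filter_upwards [Metric.tendsto_nhds.1 (hJT i j) (δ / q) (by positivity)] with T hT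
    rw [Real.dist_eq] at hT
    exact hT.le
  obtain ⟨T₁, hT₁⟩ := eventually_atTop.1 hev
  -- `T` must also be positive, so that the factor `T⁻¹` in `J_T` is not a junk value
  refine ⟨max T₁ 0, fun T hT α₁ hα₁ α₂ hα₂ => ?_⟩
  have hT0 : 0 < T := (le_max_right _ _).trans_lt hT
  have hyT : ContinuousOn y (Set.uIcc 0 T) :=
    hycont.mono fun t ht => by rw [Set.uIcc_of_le hT0.le] at ht; exact ht.1
  have hyi : ∀ i, ContinuousOn (fun t => y t i) (Set.uIcc 0 T) := continuousOn_pi.1 hyT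
  have hlin : ∀ v : Fin q → ℝ, ContinuousOn (fun t => ∑ i, v i * y t i) (Set.uIcc 0 T) :=
    fun v => continuousOn_finsetSum _ fun i _ => continuousOn_const.mul (hyi i)
  have hΦint : IntervalIntegrable (fun t => (Real.exp (∑ i, α₁ i * y t i)
      - Real.exp (∑ i, α₂ i * y t i)) ^ 2) volume 0 T :=
    (((hlin α₁).rexp.sub (hlin α₂).rexp).pow 2).intervalIntegrable
  have hQint : ∀ k : ℝ, IntervalIntegrable
      (fun t => k * (∑ i, (α₁ i - α₂ i) * y t i) ^ 2) volume 0 T := fun k =>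
    (continuousOn_const.mul ((hlin fun i => α₁ i - α₂ i).pow 2)).intervalIntegrable
  have hpt : ∀ t ∈ Set.Icc 0 T, _ := fun t ht =>
    exp_diff_sq_bounds hL0 (hL α₁ hα₁ _ (hyY t ht.1)) (hL α₂ hα₂ _ (hyY t ht.1))
      (hM α₁ hα₁ _ (hyY t ht.1)) (hM α₂ hα₂ _ (hyY t ht.1))
  have hdiff : ∀ t, ∑ i, α₁ i * y t i - ∑ i, α₂ i * y t i = ∑ i, (α₁ i - α₂ i) * y t i := by
    intro t
    simp only [sub_mul, Finset.sum_sub_distrib]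
  simp only [hdiff] at hpt
  have hlow := intervalIntegral.integral_mono_on hT0.le (hQint _) hΦint fun t ht => (hpt t ht).1
  have hupp := intervalIntegral.integral_mono_on hT0.le hΦint (hQint _) fun t ht => (hpt t ht).2
  rw [intervalIntegral.integral_const_mul, integral_quadForm hT0 hyT] at hlow hupp
  have hclose := abs_le.1
    (quadForm_close hq (hT₁ T ((le_max_left _ _).trans hT.le)) fun i => α₁ i - α₂ i)
  have hray := rayleigh_bounds hJpd.1 fun i => α₁ i - α₂ i
  constructor
  · refine le_trans ?_ hlow
    rw [mul_assoc, mul_assoc]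
    refine mul_le_mul_of_nonneg_left ?_ (sq_nonneg _)
    rw [mul_left_comm]
    refine mul_le_mul_of_nonneg_left ?_ hT0.le
    linarith [hclose.1, hray.1]
  · refine hupp.trans ?_
    rw [mul_assoc (_ ^ 2), mul_assoc (_ ^ 2)]
    refine mul_le_mul_of_nonneg_left ?_ (sq_nonneg _)
    rw [mul_assoc, mul_left_comm]
    refine mul_le_mul_of_nonneg_left ?_ hT0.le
    linarith [hclose.2, hray.2]
end
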